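/- Let X ~ Herm(μ, σ²) have an Hermite distribution, i.e. X = U + 2V with U ~ Po(α) and V ~ Po(β) independent, where μ = α + 2β and σ² = 2β, and let a = (a_1,…,a_c) ∈ [0,1]^c with a_1 + ⋯ + a_c ≤ 1. Then the multinomial marking Y = a ∘ X has the multivariate Hermite distribution Herm(μ·a, σ²·a aᵀ): there exist independent random variables U_i ~ Po(α_i) (1 ≤ i ≤ c) and V_{ij} ~ Po(β_{ij}) (1 ≤ i, j ≤ c) such that Y has the same distribution as (U_i + Σ_j V_{ij} + Σ_k V_{ki})_{i=1}^c, with parameters satisfying α_i + Σ_j β_{ij} + Σ_k β_{ki} = μ a_i, 2β_{ii} = σ² a_i², and β_{ij} + β_{ji} = σ² a_i a_j for i ≠ j. -/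

import Mathlib

open MeasureTheory ProbabilityTheory ENNReal

/-- The multinomial probability mass function with parameters `n` and `a`, as an
`ℝ≥0∞`-valued function: `p(y) = (n choose y) ∏ i, a i ^ y i * (1 - |a|) ^ (n - |y|)`,
interpreted as `0` when `|y| > n`. -/
noncomputable def multinomialENN {c : ℕ} (n : ℕ) (a : Fin c → ℝ) (y : Fin c → ℕ) : ℝ≥0∞ :=
  if (∑ i, y i) ≤ n then
    ENNReal.ofReal (((n.factorial : ℝ) /
        ((∏ i, ((y i).factorial : ℝ)) * ((n - ∑ i, y i).factorial : ℝ)))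
      * (∏ i, a i ^ y i) * (1 - ∑ i, a i) ^ (n - ∑ i, y i))
  else 0

/-- The Poisson probability mass function with rate `lam ≥ 0`, as an `ℝ≥0∞`-valued
function: `p(k) = exp(-lam) * lam^k / k!`. -/
noncomputable def poissonENN (lam : ℝ) (k : ℕ) : ℝ≥0∞ :=
  ENNReal.ofReal (Real.exp (-lam) * lam ^ k / k.factorial)

/-! In terms of formal probability generating series, a point of `X` carries the mark series
`K = (1 - |a|) + ∑ i, a i X i`, so `Y` has the series `exp (α (K - 1)) * exp (β (K ^ 2 - 1))`.
Both factors are compound Poisson, and splitting a compound Poisson law according to the type of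
its clusters (Poisson thinning) writes it as a product of independent Poisson factors: expanding
`K` and `K ^ 2` into monomials, the clusters `X i` receive total rate `(α + 2 β (1 - |a|)) a i`,
the clusters `X i * X j` receive rate `β a i a j`, and the empty clusters contribute nothing.
The coefficients are taken in `ℝ≥0∞` so that every sum of power series converges. -/

open MvPowerSeries
open scoped NNReal MvPowerSeries.WithPiTopology

section TsumPowerSeries

variable {σ ι κ : Type*}

theorem coeff_tsum_ennreal (f : ι → MvPowerSeries σ ℝ≥0∞) (d : σ →₀ ℕ) :
    coeff d (∑' i, f i) = ∑' i, coeff d (f i) :=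
  have hf : Summable f :=
    WithPiTopology.summable_iff_summable_coeff.2 fun _ => ENNReal.summable
  (WithPiTopology.hasSum_iff_hasSum_coeff.1 hf.hasSum d).tsum_eq.symm

theorem mvPowerSeries_tsum_const_smul (t : ℝ≥0) (f : ι → MvPowerSeries σ ℝ≥0∞) :
    ∑' i, t • f i = t • ∑' i, f i := by
  ext d
  simp only [coeff_tsum_ennreal, LinearMap.map_smul_of_tower, ENNReal.tsum_const_smul]

theorem mvPowerSeries_tsum_mul_tsum (f : ι → MvPowerSeries σ ℝ≥0∞)
    (g : κ → MvPowerSeries σ ℝ≥0∞) :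
    (∑' i, f i) * ∑' k, g k = ∑' p : ι × κ, f p.1 * g p.2 := by
  classical
  ext d
  simp only [coeff_tsum_ennreal, coeff_mul]
  rw [Summable.tsum_finsetSum fun _ _ => ENNReal.summable]
  refine Finset.sum_congr rfl fun p _ => ?_
  simp only [ENNReal.tsum_prod', ENNReal.tsum_mul_left, ENNReal.tsum_mul_right]

theorem mvPowerSeries_prod_tsum [Fintype ι] (f : ι → κ → MvPowerSeries σ ℝ≥0∞) :
    ∏ i, ∑' k, f i k = ∑' w : ι → κ, ∏ i, f i (w i) := by
  refine Fintype.induction_empty_option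
    (P := fun ι _ => ∀ f : ι → κ → MvPowerSeries σ ℝ≥0∞,
      ∏ i, ∑' k, f i k = ∑' w : ι → κ, ∏ i, f i (w i))
    (fun α β _ e ih f => ?_) (fun f => ?_) (fun α _ ih f => ?_) ι f
  · let _ := Fintype.ofEquiv β e.symm
    rw [← e.prod_comp, ih, ← (e.symm.arrowCongr (Equiv.refl κ)).tsum_eq]
    simp only [← e.prod_comp fun b => f b _, Equiv.arrowCongr_apply, Equiv.coe_refl,
      Equiv.symm_symm, Function.comp_apply, id_eq]
  · simp [tsum_fintype]
  · rw [Fintype.prod_option, ih, mvPowerSeries_tsum_mul_tsum,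
      ← (Equiv.piOptionEquivProd (β := fun _ => κ)).tsum_eq]
    simp only [Fintype.prod_option, Equiv.piOptionEquivProd_apply]

end TsumPowerSeries

section ExpSeries

variable {σ ι : Type*}

/-- The exponential `∑ n, f ^ n / n!` of a power series. The constant coefficient of `f` need not
vanish, as all sums converge in `ℝ≥0∞`. -/
noncomputable def expSeries (f : MvPowerSeries σ ℝ≥0∞) : MvPowerSeries σ ℝ≥0∞ :=
  ∑' n : ℕ, (n.factorial : ℝ≥0)⁻¹ • f ^ n

theorem expSeries_zero : expSeries (0 : MvPowerSeries σ ℝ≥0∞) = 1 := by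
  rw [expSeries, tsum_eq_single 0 fun n hn => by rw [zero_pow hn, smul_zero]]
  simp

theorem inv_factorial_smul_add_pow (𝕜 : Type*) {A : Type*} [Semifield 𝕜] [CharZero 𝕜]
    [CommSemiring A] [Algebra 𝕜 A] (x y : A) (n : ℕ) :
    (n.factorial : 𝕜)⁻¹ • (x + y) ^ n = ∑ p ∈ Finset.HasAntidiagonal.antidiagonal n,
      ((p.1.factorial : 𝕜)⁻¹ • x ^ p.1) * ((p.2.factorial : 𝕜)⁻¹ • y ^ p.2) := by
  rw [(Commute.all x y).add_pow', Finset.smul_sum]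
  refine Finset.sum_congr rfl fun p hp => ?_
  obtain rfl := Finset.HasAntidiagonal.mem_antidiagonal.1 hp
  rw [smul_mul_smul_comm, ← Nat.cast_smul_eq_nsmul 𝕜, smul_smul, Nat.cast_add_choose]
  congr 1
  have hfactorial : ((p.1 + p.2).factorial : 𝕜) ≠ 0 := Nat.cast_ne_zero.2 (Nat.factorial_ne_zero _)
  field_simp

theorem expSeries_add (f g : MvPowerSeries σ ℝ≥0∞) :
    expSeries (f + g) = expSeries f * expSeries g := by
  rw [expSeries, expSeries, expSeries, mvPowerSeries_tsum_mul_tsum,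
    ← (Finset.HasAntidiagonal.sigmaAntidiagonalEquivProd (A := ℕ)).tsum_eq]
  ext d
  simp only [coeff_tsum_ennreal, ENNReal.tsum_sigma', inv_factorial_smul_add_pow, map_sum]
  refine tsum_congr fun n => ?_
  rw [tsum_fintype, ← Finset.sum_coe_sort]
  rfl

theorem expSeries_sum (s : Finset ι) (f : ι → MvPowerSeries σ ℝ≥0∞) :
    expSeries (∑ i ∈ s, f i) = ∏ i ∈ s, expSeries (f i) := by
  induction s using Finset.cons_induction with
  | empty => simp [expSeries_zero]
  | cons i s hi ih => rw [Finset.sum_cons, Finset.prod_cons, expSeries_add, ih]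

end ExpSeries

section PoissonSeries

variable {σ ι : Type*}

theorem poissonENN_coe (l : ℝ≥0) (k : ℕ) :
    poissonENN l k
      = ((Real.exp (-l)).toNNReal * ((k.factorial : ℝ≥0)⁻¹ * l ^ k) : ℝ≥0) := by
  rw [poissonENN, ENNReal.ofReal, ENNReal.coe_inj]
  ext
  rw [Real.coe_toNNReal _ (by positivity)]
  push_cast
  rw [Real.coe_toNNReal _ (by positivity)]
  ring

theorem tsum_poissonENN (l : ℝ≥0) : ∑' k, poissonENN l k = 1 := by
  have h := hasSum_one_poissonMeasure l
  simp only [poissonENN]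
  rw [← ENNReal.ofReal_tsum_of_nonneg (fun k => by positivity) h.summable, h.tsum_eq,
    ENNReal.ofReal_one]

/-- The probability generating series of a compound Poisson law: the sum of a Poisson number, of
rate `l`, of independent clusters each having generating series `f`. -/
noncomputable def poissonSeries (l : ℝ≥0) (f : MvPowerSeries σ ℝ≥0∞) : MvPowerSeries σ ℝ≥0∞ :=
  ∑' k : ℕ, poissonENN l k • f ^ k

theorem poissonSeries_one (l : ℝ≥0) : poissonSeries l (1 : MvPowerSeries σ ℝ≥0∞) = 1 := by
  ext d
  simp only [poissonSeries, one_pow, coeff_tsum_ennreal, map_smul, smul_eq_mul,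
    ENNReal.tsum_mul_right, tsum_poissonENN, one_mul]

theorem poissonSeries_eq_smul_expSeries (l : ℝ≥0) (f : MvPowerSeries σ ℝ≥0∞) :
    poissonSeries l f = (Real.exp (-l)).toNNReal • expSeries (l • f) := by
  rw [poissonSeries, expSeries, ← mvPowerSeries_tsum_const_smul]
  refine tsum_congr fun k => ?_
  rw [poissonENN_coe, smul_pow, smul_smul, smul_smul, mul_assoc]
  rfl

theorem prod_poissonSeries (s : Finset ι) (l : ι → ℝ≥0) (f : ι → MvPowerSeries σ ℝ≥0∞) :
    ∏ i ∈ s, poissonSeries (l i) (f i)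
      = (Real.exp (-(∑ i ∈ s, l i : ℝ≥0))).toNNReal • expSeries (∑ i ∈ s, l i • f i) := by
  simp only [poissonSeries_eq_smul_expSeries, expSeries_sum, Finset.prod_smul]
  rw [← Real.toNNReal_prod_of_nonneg fun _ _ => (Real.exp_pos _).le, ← Real.exp_sum,
    Finset.sum_neg_distrib, NNReal.coe_sum]

theorem poissonSeries_add (l m : ℝ≥0) (f : MvPowerSeries σ ℝ≥0∞) :
    poissonSeries (l + m) f = poissonSeries l f * poissonSeries m f := by
  have h := prod_poissonSeries Finset.univ ![l, m] ![f, f]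
  simp only [Fin.prod_univ_two, Fin.sum_univ_two, Matrix.cons_val_zero, Matrix.cons_val_one] at h
  rw [h, poissonSeries_eq_smul_expSeries, add_smul]

theorem poissonSeries_sum_smul [Fintype ι] {p : ι → ℝ≥0} (hp : ∑ i, p i = 1) (l : ℝ≥0)
    (f : ι → MvPowerSeries σ ℝ≥0∞) :
    poissonSeries l (∑ i, p i • f i) = ∏ i, poissonSeries (l * p i) (f i) := by
  rw [prod_poissonSeries, poissonSeries_eq_smul_expSeries, ← Finset.mul_sum, hp, mul_one,
    Finset.smul_sum]
  simp only [smul_smul]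

theorem poissonSeries_monomial (l : ℝ≥0) (d : σ →₀ ℕ) :
    poissonSeries l (monomial d 1) = ∑' k : ℕ, monomial (k • d) (poissonENN l k) := by
  refine tsum_congr fun k => ?_
  rw [monomial_pow, one_pow, ← map_smul, smul_eq_mul, mul_one]

theorem tsum_hermite_mul_coeff_pow (l m : ℝ≥0) (f : MvPowerSeries σ ℝ≥0∞) (d : σ →₀ ℕ) :
    ∑' n : ℕ, (∑' u : ℕ, ∑' v : ℕ,
        if u + 2 * v = n then poissonENN l u * poissonENN m v else 0) * coeff d (f ^ n)
      = coeff d (poissonSeries l f * poissonSeries m (f ^ 2)) := by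
  rw [poissonSeries, poissonSeries, mvPowerSeries_tsum_mul_tsum, coeff_tsum_ennreal,
    ENNReal.tsum_prod']
  simp only [← ENNReal.tsum_mul_right]
  rw [ENNReal.tsum_comm]
  refine tsum_congr fun u => ?_
  rw [ENNReal.tsum_comm]
  refine tsum_congr fun v => ?_
  rw [tsum_eq_single (u + 2 * v) fun n hn => by rw [if_neg hn.symm, zero_mul], if_pos rfl,
    smul_mul_smul_comm, ← pow_mul, ← pow_add, map_smul, smul_eq_mul]

end PoissonSeries

section MarkSeries

variable {σ : Type*}

/-- The monomial recording the mark of one point, where `none` stands for an unmarked point. -/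
noncomputable def markMonomial : Option σ → MvPowerSeries σ ℝ≥0∞
  | none => 1
  | some i => X i

variable [Fintype σ] {a : σ → ℝ≥0}

/-- The law of the mark of one point: mark `i` has probability `a i`, and `none` has the
remaining probability. The subtraction is truncated, so this is a law only if `∑ i, a i ≤ 1`. -/
noncomputable def markProb (a : σ → ℝ≥0) : Option σ → ℝ≥0
  | none => 1 - ∑ i, a i
  | some i => a i

/-- The probability generating series of the mark of one point. -/
noncomputable def markSeries (a : σ → ℝ≥0) : MvPowerSeries σ ℝ≥0∞ :=
  ∑ o, markProb a o • markMonomial o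

theorem sum_markProb (ha : ∑ i, a i ≤ 1) : ∑ o, markProb a o = 1 := by
  rw [Fintype.sum_option]
  exact tsub_add_cancel_of_le ha

theorem poissonSeries_markSeries (ha : ∑ i, a i ≤ 1) (l : ℝ≥0) :
    poissonSeries l (markSeries a) = ∏ i, poissonSeries (l * a i) (X i) := by
  rw [markSeries, poissonSeries_sum_smul (sum_markProb ha), Fintype.prod_option]
  simp only [markMonomial, markProb, poissonSeries_one, one_mul]

theorem poissonSeries_markSeries_sq (ha : ∑ i, a i ≤ 1) (l : ℝ≥0) :
    poissonSeries l (markSeries a ^ 2)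
      = (∏ i, poissonSeries (2 * l * (1 - ∑ k, a k) * a i) (X i))
        * ∏ i, ∏ j, poissonSeries (l * a i * a j) (X i * X j) := by
  have hsq : markSeries a ^ 2 = ∑ p : Option σ × Option σ,
      (markProb a p.1 * markProb a p.2) • (markMonomial p.1 * markMonomial p.2) := by
    rw [sq, markSeries, Fintype.sum_mul_sum, Fintype.sum_prod_type]
    simp only [smul_mul_smul_comm]
  have hprob : ∑ p : Option σ × Option σ, markProb a p.1 * markProb a p.2 = 1 := by
    rw [Fintype.sum_prod_type, ← Fintype.sum_mul_sum, sum_markProb ha, one_mul]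
  rw [hsq, poissonSeries_sum_smul hprob, Fintype.prod_prod_type]
  simp only [Fintype.prod_option, markMonomial, markProb, one_mul, mul_one, poissonSeries_one,
    Finset.prod_mul_distrib, ← mul_assoc]
  congr 1
  rw [← Finset.prod_mul_distrib]
  refine Finset.prod_congr rfl fun i _ => ?_
  rw [← poissonSeries_add]
  congr 1
  ring

theorem poissonSeries_markSeries_mul_sq (ha : ∑ i, a i ≤ 1) (l m : ℝ≥0) :
    poissonSeries l (markSeries a) * poissonSeries m (markSeries a ^ 2)
      = (∏ i, poissonSeries ((l + 2 * m * (1 - ∑ k, a k)) * a i) (X i))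
        * ∏ i, ∏ j, poissonSeries (m * a i * a j) (X i * X j) := by
  rw [poissonSeries_markSeries ha, poissonSeries_markSeries_sq ha, ← mul_assoc,
    ← Finset.prod_mul_distrib]
  simp only [← poissonSeries_add, add_mul]

theorem prod_markMonomial_pow (w : Option σ → ℕ) :
    ∏ o, markMonomial o ^ w o = monomial (Finsupp.equivFunOnFinite.symm (w ∘ some)) 1 := by
  rw [Fintype.prod_option]
  simp only [markMonomial, one_pow, one_mul, X_pow_eq, prod_monomial, Finset.prod_const_one,
    Finsupp.equivFunOnFinite_symm_eq_sum, Function.comp_apply]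

theorem markSeries_pow [DecidableEq σ] (a : σ → ℝ≥0) (n : ℕ) :
    markSeries a ^ n = ∑ w ∈ Finset.piAntidiag Finset.univ n,
      (Nat.multinomial Finset.univ w * ∏ o, markProb a o ^ w o : ℝ≥0) •
        monomial (Finsupp.equivFunOnFinite.symm (w ∘ some)) 1 := by
  rw [markSeries, Finset.sum_pow_eq_sum_piAntidiag]
  refine Finset.sum_congr rfl fun w _ => ?_
  simp only [smul_pow, Finset.prod_smul, prod_markMonomial_pow]
  rw [mul_smul, Nat.cast_smul_eq_nsmul, nsmul_eq_mul]

/-- The multinomial counts of `n` points with mark counts `y`, unmarked points included. -/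
def fullCounts (n : ℕ) (y : σ → ℕ) : Option σ → ℕ
  | none => n - ∑ i, y i
  | some i => y i

theorem sum_eq_and_comp_some_eq_iff {n : ℕ} {y : σ → ℕ} {w : Option σ → ℕ} :
    (∑ o, w o = n ∧ w ∘ some = y) ↔ ∑ i, y i ≤ n ∧ w = fullCounts n y := by
  rw [Fintype.sum_option]
  constructor
  · rintro ⟨rfl, rfl⟩
    refine ⟨Nat.le_add_left _ _, funext fun o => ?_⟩
    cases o <;> simp [fullCounts]
  · rintro ⟨hy, rfl⟩
    exact ⟨Nat.sub_add_cancel hy, rfl⟩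

end MarkSeries

section Laws

variable {c : ℕ}

theorem multinomialENN_coe {a : Fin c → ℝ≥0} (ha : ∑ i, a i ≤ 1) {n : ℕ} {y : Fin c → ℕ}
    (hy : ∑ i, y i ≤ n) :
    multinomialENN n (fun i => a i) y
      = (Nat.multinomial Finset.univ (fullCounts n y)
          * ∏ o, markProb a o ^ fullCounts n y o : ℝ≥0) := by
  have hsum : ∑ o, fullCounts n y o = n := (sum_eq_and_comp_some_eq_iff.2 ⟨hy, rfl⟩).1
  have hmult : (Nat.multinomial Finset.univ (fullCounts n y) : ℝ)
      = n.factorial / ((∏ i, ((y i).factorial : ℝ)) * (n - ∑ i, y i).factorial) := by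
    rw [_root_.eq_div_iff (by positivity), mul_comm]
    have h := Nat.multinomial_spec Finset.univ (fullCounts n y)
    rw [hsum, Fintype.prod_option, mul_comm (Nat.factorial _)] at h
    exact_mod_cast h
  rw [multinomialENN, if_pos hy, ← ENNReal.ofReal_coe_nnreal, Fintype.prod_option]
  simp only [markProb, fullCounts]
  push_cast [NNReal.coe_sub ha]
  rw [hmult, mul_comm ((1 - _) ^ _), mul_assoc]

theorem coeff_markSeries_pow {a : Fin c → ℝ≥0} (ha : ∑ i, a i ≤ 1) (n : ℕ) (y : Fin c → ℕ) :
    coeff (Finsupp.equivFunOnFinite.symm y) (markSeries a ^ n)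
      = multinomialENN n (fun i => a i) y := by
  rw [markSeries_pow, map_sum]
  simp only [LinearMap.map_smul_of_tower, coeff_monomial, EmbeddingLike.apply_eq_iff_eq,
    smul_ite, smul_zero]
  rw [← Finset.sum_filter]
  have hcounts : ∀ w, w ∈ (Finset.piAntidiag Finset.univ n).filter (fun w => y = w ∘ some)
      ↔ ∑ i, y i ≤ n ∧ w = fullCounts n y := fun w => by
    simpa [eq_comm (a := y)] using sum_eq_and_comp_some_eq_iff
  by_cases hy : ∑ i, y i ≤ n
  · rw [Finset.eq_singleton_iff_unique_mem.2 ⟨(hcounts _).2 ⟨hy, rfl⟩,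
      fun w hw => ((hcounts w).1 hw).2⟩, Finset.sum_singleton, multinomialENN_coe ha hy,
      ENNReal.smul_def, smul_eq_mul, mul_one]
  · rw [Finset.eq_empty_of_forall_notMem fun w hw => hy ((hcounts w).1 hw).1,
      Finset.sum_empty, multinomialENN, if_neg hy]

theorem coeff_prod_poissonSeries_X (l : Fin c → ℝ≥0) (m : Fin c → Fin c → ℝ≥0)
    (y : Fin c → ℕ) :
    coeff (Finsupp.equivFunOnFinite.symm y)
        ((∏ i, poissonSeries (l i) (X i)) * ∏ i, ∏ j, poissonSeries (m i j) (X i * X j))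
      = ∑' u : Fin c → ℕ, ∑' v : Fin c → Fin c → ℕ,
          if ∀ i, u i + ∑ j, v i j + ∑ j, v j i = y i then
            (∏ i, poissonENN (l i) (u i)) * ∏ i, ∏ j, poissonENN (m i j) (v i j)
          else 0 := by
  have hexponent (u : Fin c → ℕ) (v : Fin c → Fin c → ℕ) :
      Finsupp.equivFunOnFinite.symm y = ∑ i, u i • Finsupp.single i 1
          + ∑ i, ∑ j, v i j • (Finsupp.single i 1 + Finsupp.single j 1)
        ↔ ∀ i, u i + ∑ j, v i j + ∑ j, v j i = y i := by
    rw [DFunLike.ext_iff]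
    refine forall_congr' fun l => ?_
    simp [Finset.sum_add_distrib, Finsupp.single_apply, add_assoc, eq_comm (a := y l)]
  simp only [X_def, monomial_mul_monomial, one_mul, poissonSeries_monomial,
    mvPowerSeries_prod_tsum, mvPowerSeries_tsum_mul_tsum, coeff_tsum_ennreal, prod_monomial,
    coeff_monomial, hexponent, ENNReal.tsum_prod']

theorem measure_eq_tsum_measure_preimage_inter {Ω ι : Type*} [MeasurableSpace Ω]
    [MeasurableSpace ι] [MeasurableSingletonClass ι] [Countable ι] (P : Measure Ω) {X : Ω → ι}
    (hX : Measurable X) (s : Set Ω) : P s = ∑' m, P (X ⁻¹' {m} ∩ s) := by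
  have hfiber (m : ι) : MeasurableSet (X ⁻¹' {m}) := hX (measurableSet_singleton m)
  have h := tsum_measure_preimage_singleton (μ := P.restrict s) Set.countable_univ
    fun m _ => hfiber m
  rw [tsum_univ fun m => P.restrict s (X ⁻¹' {m}), Set.preimage_univ,
    Measure.restrict_apply_univ] at h
  simp only [← h, Measure.restrict_apply (hfiber _)]

end Laws

/-- If `X ~ Herm(μ, σ²)` is Hermite (i.e. `X = U + 2V` with `U ~ Po(α)`, `V ~ Po(β)`
independent, `μ = α + 2β`, `σ² = 2β`) and `Y = a ∘ X` is the multinomial marking of `X` with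
parameters `a ∈ [0,1]^c`, `|a| ≤ 1`, then `Y ~ Herm(μ a, σ² a aᵀ)` is multivariate Hermite:
there are nonnegative rates `α' i` and `β' i j` with
`α' i + ∑ j, β' i j + ∑ k, β' k i = μ * a i`, `2 β' i i = σ² * (a i)²`, and
`β' i j + β' j i = σ² * a i * a j` for `i ≠ j`, such that `Y` has the same distribution as
`(U' i + ∑ j, V' i j + ∑ k, V' k i)_i` for independent `U' i ~ Po(α' i)`,
`V' i j ~ Po(β' i j)`. -/
theorem marking_of_hermite
    {Ω : Type*} [MeasurableSpace Ω] (P : Measure Ω) [IsProbabilityMeasure P]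
    {c : ℕ} (a : Fin c → ℝ) (ha : ∀ i, a i ∈ Set.Icc (0 : ℝ) 1) (ha1 : ∑ i, a i ≤ 1)
    (α β : ℝ) (hα : 0 ≤ α) (hβ : 0 ≤ β)
    (X : Ω → ℕ) (Y : Ω → Fin c → ℕ) (hX : Measurable X) (hY : Measurable Y)
    (hXdist : ∀ x : ℕ, P {ω | X ω = x}
      = ∑' u : ℕ, ∑' v : ℕ,
          if u + 2 * v = x then poissonENN α u * poissonENN β v else 0)
    (hMark : ∀ (m : ℕ) (y : Fin c → ℕ),
      P {ω | X ω = m ∧ Y ω = y} = P {ω | X ω = m} * multinomialENN m a y) :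
    ∃ (α' : Fin c → ℝ) (β' : Fin c → Fin c → ℝ),
      (∀ i, 0 ≤ α' i) ∧ (∀ i j, 0 ≤ β' i j) ∧
      (∀ i, α' i + ∑ j, β' i j + ∑ k, β' k i = (α + 2 * β) * a i) ∧
      (∀ i, 2 * β' i i = (2 * β) * a i ^ 2) ∧
      (∀ i j, i ≠ j → β' i j + β' j i = (2 * β) * a i * a j) ∧
      ∀ y : Fin c → ℕ, P {ω | Y ω = y}
        = ∑' u : Fin c → ℕ, ∑' v : Fin c → Fin c → ℕ,
            if (∀ i, u i + ∑ j, v i j + ∑ j, v j i = y i) then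
              (∏ i, poissonENN (α' i) (u i)) * ∏ i, ∏ j, poissonENN (β' i j) (v i j)
            else 0 := by
  lift α to ℝ≥0 using hα
  lift β to ℝ≥0 using hβ
  lift a to Fin c → ℝ≥0 using fun i => (ha i).1
  have ha_le : ∑ i, a i ≤ 1 := by
    simpa only [← NNReal.coe_le_coe, NNReal.coe_sum, NNReal.coe_one] using ha1
  refine ⟨fun i => ((α + 2 * β * (1 - ∑ k, a k)) * a i : ℝ≥0),
    fun i j => (β * a i * a j : ℝ≥0), fun i => NNReal.coe_nonneg _,
    fun i j => NNReal.coe_nonneg _, fun i => ?mean, fun i => by push_cast; ring,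
    fun i j _ => by push_cast; ring, fun y => ?law⟩
  case mean =>
    push_cast [NNReal.coe_sub ha_le]
    rw [← Finset.mul_sum, ← Finset.sum_mul, ← Finset.mul_sum]
    ring
  case law =>
    calc P {ω | Y ω = y} = ∑' m, P (X ⁻¹' {m} ∩ {ω | Y ω = y}) :=
          measure_eq_tsum_measure_preimage_inter P hX _
      _ = coeff (Finsupp.equivFunOnFinite.symm y)
            (poissonSeries α (markSeries a) * poissonSeries β (markSeries a ^ 2)) := by
          rw [← tsum_hermite_mul_coeff_pow]
          refine tsum_congr fun m => ?_
          rw [coeff_markSeries_pow ha_le, ← hXdist]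
          exact hMark m y
      _ = _ := by rw [poissonSeries_markSeries_mul_sq ha_le, coeff_prod_poissonSeries_X]
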